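/- Let p be a prime and let G = ℚ_p^× be the multiplicative group of the field of p-adic numbers, with its locally compact topology. Let N denote the set of open finite-index subgroups of G. Then the Chabauty space C(G) is a proper compactification of ℕ with respect to N; that is, C(G) is a compact metrizable space and N is an open, countable, dense, discrete subset of C(G). -/

import Mathlib

/-- The Chabauty space of a topological group `G`: the set of closed subgroups of `G`. -/
def ChabautySpace (G : Type*) [Group G] [TopologicalSpace G] : Type _ :=
  {H : Subgroup G // IsClosed (H : Set G)}

/-- The Chabauty topology on the space of closed subgroups, generated by the sets
`O_K = {H | H ∩ K = ∅}` for `K` compact and `O'_U = {H | H ∩ U ≠ ∅}` for `U` open. -/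
instance ChabautySpace.instTopologicalSpace (G : Type*) [Group G] [TopologicalSpace G] :
    TopologicalSpace (ChabautySpace G) :=
  TopologicalSpace.generateFrom
    ({S | ∃ K : Set G, IsCompact K ∧ S = {H : ChabautySpace G | (H.1 : Set G) ∩ K = ∅}} ∪
     {S | ∃ U : Set G, IsOpen U ∧ S = {H : ChabautySpace G | ((H.1 : Set G) ∩ U).Nonempty}})

/-!
Limits along ultrafilters make `C(G)` compact for every topological group, and compactness turns a
countable family of Hausdorff-separating subbasic sets into a subbasis, so `C(G)` is metrizable.

An open finite-index subgroup `H` is isolated because it is determined by finitely many open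
conditions. For `n ≥ 2` the group `1 + p ^ n ℤ_p` is topologically generated by each of its elements
at maximal distance from `1`, and these form an open set, so all subgroups near `H` contain a common
`U = 1 + p ^ n ℤ_p ⊆ H`. They meet finitely many cosets of `U` generating `H / U`, hence contain
`H`, and they miss the nontrivial representatives of `G / H`, hence equal `H`.

For density, a closed subgroup `H` missing a compact set `K` is first enlarged to an open subgroup
`M` missing `K`. The quotient `G / M` is discrete, abelian and finitely generated, hence residually
finite, so a finite-index subgroup of it misses the finite image of `K`. Enlarging `H` while
avoiding compact sets stays close to `H` in the Chabauty topology.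
-/

open Set Filter Topology TopologicalSpace

theorem eq_of_le_of_compactSpace_of_t2Space {X : Type*} {t₁ t₂ : TopologicalSpace X}
    (hle : t₁ ≤ t₂) (h₁ : @CompactSpace X t₁) (h₂ : @T2Space X t₂) : t₁ = t₂ :=
  let e := @Continuous.homeoOfEquivCompactToT2 X X t₁ t₂ h₁ h₂ (Equiv.refl X)
    (continuous_id_iff_le.2 hle)
  hle.antisymm (continuous_id_iff_le.1 (@Homeomorph.continuous_symm X X t₁ t₂ e))

namespace ChabautySpace

section Topology

variable {G : Type*} [Group G] [TopologicalSpace G]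

theorem isOpen_setOf_disjoint {K : Set G} (hK : IsCompact K) :
    IsOpen {H : ChabautySpace G | Disjoint (H.1 : Set G) K} := by
  simp only [disjoint_iff_inter_eq_empty]
  exact isOpen_generateFrom_of_mem (Or.inl ⟨K, hK, rfl⟩)

theorem isOpen_setOf_inter_nonempty {U : Set G} (hU : IsOpen U) :
    IsOpen {H : ChabautySpace G | ((H.1 : Set G) ∩ U).Nonempty} :=
  isOpen_generateFrom_of_mem (Or.inr ⟨U, hU, rfl⟩)

theorem eventually_disjoint {H : ChabautySpace G} {K : Set G} (hK : IsCompact K)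
    (hHK : Disjoint (H.1 : Set G) K) : ∀ᶠ L in 𝓝 H, Disjoint (L.1 : Set G) K :=
  (isOpen_setOf_disjoint hK).mem_nhds hHK

theorem eventually_inter_nonempty {H : ChabautySpace G} {U : Set G} (hU : IsOpen U)
    (hHU : ((H.1 : Set G) ∩ U).Nonempty) : ∀ᶠ L in 𝓝 H, ((L.1 : Set G) ∩ U).Nonempty :=
  (isOpen_setOf_inter_nonempty hU).mem_nhds hHU

theorem exists_isCompact_forall_ge_mem {H : ChabautySpace G} {W : Set (ChabautySpace G)}
    (hW : IsOpen W) (hH : H ∈ W) :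
    ∃ K : Set G, IsCompact K ∧ Disjoint (H.1 : Set G) K ∧
      ∀ L : ChabautySpace G, H.1 ≤ L.1 → Disjoint (L.1 : Set G) K → L ∈ W := by
  induction hW with
  | basic S hS =>
    obtain ⟨K, hK, rfl⟩ | ⟨U, -, rfl⟩ := hS
    · exact ⟨K, hK, disjoint_iff_inter_eq_empty.2 hH, fun L _ => disjoint_iff_inter_eq_empty.1⟩
    · exact ⟨∅, isCompact_empty, disjoint_empty _,
        fun L hHL _ => Set.Nonempty.mono (inter_subset_inter_left _ hHL) hH⟩
  | univ => exact ⟨∅, isCompact_empty, disjoint_empty _, fun L _ _ => mem_univ L⟩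
  | inter S T _ _ ihS ihT =>
    obtain ⟨K, hK, hHK, hKS⟩ := ihS hH.1
    obtain ⟨Q, hQ, hHQ, hQT⟩ := ihT hH.2
    refine ⟨K ∪ Q, hK.union hQ, disjoint_union_right.2 ⟨hHK, hHQ⟩, fun L hHL hL => ?_⟩
    rw [disjoint_union_right] at hL
    exact ⟨hKS L hHL hL.1, hQT L hHL hL.2⟩
  | sUnion 𝒮 _ ih =>
    obtain ⟨S, hS, hHS⟩ := hH
    obtain ⟨K, hK, hHK, hKS⟩ := ih S hS hHS
    exact ⟨K, hK, hHK, fun L hHL hL => ⟨S, hS, hKS L hHL hL⟩⟩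

theorem isOpen_singleton_of_eventually_le {H : ChabautySpace G} [H.1.FiniteIndex]
    (hH : ∀ᶠ L in 𝓝 H, H.1 ≤ L.1) : IsOpen {H} := by
  let K : Set G := range (Quotient.out : G ⧸ H.1 → G) ∩ (H.1 : Set G)ᶜ
  have hK : IsCompact K := ((finite_range (ι := G ⧸ H.1) Quotient.out).inter_of_left _).isCompact
  rw [isOpen_singleton_iff_nhds_eq_pure]
  refine le_antisymm (le_pure_iff.2 ?_) (pure_le_nhds H)
  filter_upwards [hH, eventually_disjoint hK (disjoint_compl_right.mono_right inter_subset_right)]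
    with L hHL hLK
  refine Subtype.ext (le_antisymm (fun x hx => ?_) hHL)
  obtain ⟨h, hh⟩ := QuotientGroup.mk_out_eq_mul H.1 x
  have hout : (x : G ⧸ H.1).out ∈ L.1 := hh ▸ L.1.mul_mem hx (hHL h.2)
  have houtH : (x : G ⧸ H.1).out ∈ H.1 := by
    by_contra hnot
    exact disjoint_left.1 hLK hout ⟨mem_range_self _, hnot⟩
  rw [hh] at houtH
  exact (H.1.mul_mem_cancel_right h.2).1 houtH

/-- The subbasic sets of the Chabauty topology attached to a basis `B` of `G`: the subgroups
meeting a given `b ∈ B`, and those missing the closure of a relatively compact `b ∈ B`. -/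
def basicSubbasis (B : Set (Set G)) : Set (Set (ChabautySpace G)) :=
  (fun b => {H | ((H.1 : Set G) ∩ b).Nonempty}) '' B ∪
    (fun b => {H | Disjoint (H.1 : Set G) (closure b)}) '' {b ∈ B | IsCompact (closure b)}

theorem countable_basicSubbasis {B : Set (Set G)} (hB : B.Countable) :
    (basicSubbasis B).Countable :=
  (hB.image _).union ((hB.mono (sep_subset _ _)).image _)

theorem instTopologicalSpace_le_generateFrom_basicSubbasis {B : Set (Set G)}
    (hB : IsTopologicalBasis B) : instTopologicalSpace G ≤ generateFrom (basicSubbasis B) := by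
  refine le_generateFrom ?_
  rintro _ (⟨b, hb, rfl⟩ | ⟨b, hb, rfl⟩)
  · exact isOpen_setOf_inter_nonempty (hB.isOpen hb)
  · exact isOpen_setOf_disjoint hb.2

variable [IsTopologicalGroup G]

/-- The limit of an ultrafilter `F` of closed subgroups: the set of points all of whose
neighbourhoods meet `F`-almost every subgroup. -/
def ultrafilterLimit (F : Ultrafilter (ChabautySpace G)) : ChabautySpace G where
  val :=
    { carrier := {x | ∀ U ∈ 𝓝 x, ∀ᶠ H in (F : Filter (ChabautySpace G)),
        ((H.1 : Set G) ∩ U).Nonempty}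
      one_mem' := fun U hU => Eventually.of_forall fun H =>
        ⟨1, H.1.one_mem, mem_of_mem_nhds hU⟩
      mul_mem' := by
        intro x y hx hy U hU
        have hmul : Tendsto (fun q : G × G => q.1 * q.2) (𝓝 x ×ˢ 𝓝 y) (𝓝 (x * y)) := by
          rw [← nhds_prod_eq]; exact continuous_mul.tendsto (x, y)
        obtain ⟨V, hV, W, hW, hVW⟩ := mem_prod_iff.1 (hmul hU)
        filter_upwards [hx V hV, hy W hW] with H ⟨a, ha, haV⟩ ⟨b, hb, hbW⟩
        exact ⟨a * b, H.1.mul_mem ha hb, hVW (mk_mem_prod haV hbW)⟩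
      inv_mem' := by
        intro x hx U hU
        filter_upwards [hx _ (continuous_inv.tendsto x hU)] with H ⟨a, ha, haU⟩
        exact ⟨a⁻¹, H.1.inv_mem ha, haU⟩ }
  property := by
    refine isClosed_iff_frequently.2 fun x hx U hU => ?_
    obtain ⟨y, hy, hyU⟩ := (hx.and_eventually (eventually_mem_nhds_iff.2 hU)).exists
    exact hy U hyU

theorem mem_ultrafilterLimit_of_tendsto {F : Ultrafilter (ChabautySpace G)}
    {f : ChabautySpace G → G} {x : G} (hf : ∀ᶠ H in (F : Filter (ChabautySpace G)), f H ∈ H.1)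
    (hx : Tendsto f F (𝓝 x)) : x ∈ (ultrafilterLimit F).1 := fun U hU => by
  filter_upwards [hf, hx hU] with H hH hHU
  exact ⟨f H, hH, hHU⟩

theorem eventually_disjoint_of_disjoint_ultrafilterLimit {F : Ultrafilter (ChabautySpace G)}
    {K : Set G} (hK : IsCompact K) (hFK : Disjoint ((ultrafilterLimit F).1 : Set G) K) :
    ∀ᶠ H in (F : Filter (ChabautySpace G)), Disjoint (H.1 : Set G) K := by
  by_contra hmeets
  rw [← Ultrafilter.eventually_not] at hmeets
  have hpoint : ∀ H : ChabautySpace G, ¬ Disjoint (H.1 : Set G) K → ∃ x ∈ H.1, x ∈ K :=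
    fun H => not_disjoint_iff.1
  choose! f hfH hfK using hpoint
  obtain ⟨x, hxK, hx⟩ := hK.ultrafilter_le_nhds (F.map f)
    (le_principal_iff.2 (hmeets.mono hfK))
  exact disjoint_left.1 hFK (mem_ultrafilterLimit_of_tendsto (hmeets.mono hfH) hx) hxK

theorem ultrafilter_le_nhds_ultrafilterLimit (F : Ultrafilter (ChabautySpace G)) :
    (F : Filter (ChabautySpace G)) ≤ 𝓝 (ultrafilterLimit F) := by
  rw [nhds_generateFrom]
  refine le_iInf₂ fun S hS => le_principal_iff.2 ?_
  obtain ⟨hmem, ⟨K, hK, rfl⟩ | ⟨U, hU, rfl⟩⟩ := hS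
  · filter_upwards [eventually_disjoint_of_disjoint_ultrafilterLimit hK
      (disjoint_iff_inter_eq_empty.2 hmem)] with H hH using disjoint_iff_inter_eq_empty.1 hH
  · obtain ⟨x, hx, hxU⟩ := hmem
    exact hx U (hU.mem_nhds hxU)

instance : CompactSpace (ChabautySpace G) :=
  ⟨isCompact_iff_ultrafilter_le_nhds.2 fun F _ =>
    ⟨ultrafilterLimit F, mem_univ _, ultrafilter_le_nhds_ultrafilterLimit F⟩⟩

variable [LocallyCompactSpace G]

theorem exists_disjoint_isOpen_generateFrom_basicSubbasis {B : Set (Set G)}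
    (hB : IsTopologicalBasis B) {H L : ChabautySpace G} {x : G} (hxH : x ∈ H.1) (hxL : x ∉ L.1) :
    ∃ u v, IsOpen[generateFrom (basicSubbasis B)] u ∧ IsOpen[generateFrom (basicSubbasis B)] v ∧
      H ∈ u ∧ L ∈ v ∧ Disjoint u v := by
  obtain ⟨K, hK, hxK, hKL⟩ := exists_compact_subset L.2.isOpen_compl hxL
  obtain ⟨b, hb, hxb, hbK⟩ := hB.exists_subset_of_mem_open hxK isOpen_interior
  have hbK : b ⊆ K := hbK.trans interior_subset
  have hbL : Disjoint (L.1 : Set G) (closure b) := disjoint_compl_right.mono_right <|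
    (closure_mono hbK).trans (hK.closure_subset_of_isOpen L.2.isOpen_compl hKL)
  refine ⟨_, _, isOpen_generateFrom_of_mem (Or.inl ⟨b, hb, rfl⟩),
    isOpen_generateFrom_of_mem (Or.inr ⟨b, ⟨hb, hK.closure_of_subset hbK⟩, rfl⟩),
    ⟨x, hxH, hxb⟩, hbL, ?_⟩
  exact disjoint_left.2 fun M ⟨y, hyM, hyb⟩ hM => disjoint_left.1 hM hyM (subset_closure hyb)

theorem t2Space_generateFrom_basicSubbasis {B : Set (Set G)} (hB : IsTopologicalBasis B) :
    @T2Space (ChabautySpace G) (generateFrom (basicSubbasis B)) := by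
  let _ : TopologicalSpace (ChabautySpace G) := generateFrom (basicSubbasis B)
  refine ⟨fun H L hne => ?_⟩
  by_cases hHL : H.1 ≤ L.1
  · obtain ⟨x, hxL, hxH⟩ := SetLike.not_le_iff_exists.1
      fun hLH => hne (Subtype.ext (le_antisymm hHL hLH))
    obtain ⟨v, u, hv, hu, hLv, hHu, hvu⟩ :=
      exists_disjoint_isOpen_generateFrom_basicSubbasis hB hxL hxH
    exact ⟨u, v, hu, hv, hHu, hLv, hvu.symm⟩
  · obtain ⟨x, hxH, hxL⟩ := SetLike.not_le_iff_exists.1 hHL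
    exact exists_disjoint_isOpen_generateFrom_basicSubbasis hB hxH hxL

theorem instTopologicalSpace_eq_generateFrom_basicSubbasis {B : Set (Set G)}
    (hB : IsTopologicalBasis B) : instTopologicalSpace G = generateFrom (basicSubbasis B) :=
  eq_of_le_of_compactSpace_of_t2Space (instTopologicalSpace_le_generateFrom_basicSubbasis hB)
    inferInstance (t2Space_generateFrom_basicSubbasis hB)

instance : T2Space (ChabautySpace G) := by
  rw [instTopologicalSpace_eq_generateFrom_basicSubbasis isTopologicalBasis_opens]
  exact t2Space_generateFrom_basicSubbasis isTopologicalBasis_opens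

instance [SecondCountableTopology G] : SecondCountableTopology (ChabautySpace G) :=
  ⟨⟨_, countable_basicSubbasis (countable_countableBasis G),
    instTopologicalSpace_eq_generateFrom_basicSubbasis (isBasis_countableBasis G)⟩⟩

end Topology

end ChabautySpace

section TopologicalGroup

variable {G : Type*} [Group G] [TopologicalSpace G]

variable (G) in
/-- Compact generation of a topological group: some compact set generates it algebraically. (In
Mathlib, `IsCompactlyGenerated` refers to lattices and `CompactlyGeneratedSpace` to topologies.) -/
def IsCompactlyGeneratedGroup : Prop :=
  ∃ C : Set G, IsCompact C ∧ Subgroup.closure C = ⊤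

theorem IsCompactlyGeneratedGroup.fg_quotient [IsTopologicalGroup G]
    (hG : IsCompactlyGeneratedGroup G) {M : Subgroup G} [M.Normal] (hM : IsOpen (M : Set G)) :
    Group.FG (G ⧸ M) := by
  obtain ⟨C, hC, hCG⟩ := hG
  have : DiscreteTopology (G ⧸ M) := QuotientGroup.discreteTopology hM
  refine Group.fg_iff.2 ⟨QuotientGroup.mk' M '' C, ?_,
    (hC.image QuotientGroup.continuous_mk).finite_of_discrete⟩
  rw [← MonoidHom.map_closure, hCG,
    Subgroup.map_top_of_surjective _ (QuotientGroup.mk'_surjective M)]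

variable [IsTopologicalGroup G]

/-- The topological generators of a subgroup `U`: the elements whose powers form a dense
subgroup of `U`. -/
def topologicalGenerators (U : Subgroup G) : Set G :=
  {g | (Subgroup.zpowers g).topologicalClosure = U}

theorem topologicalGenerators_subset (U : Subgroup G) : topologicalGenerators U ⊆ U := by
  rintro g rfl
  exact Subgroup.le_topologicalClosure _ (Subgroup.mem_zpowers g)

theorem isOpen_of_nonempty_interior_topologicalGenerators {U : Subgroup G}
    (hU : (interior (topologicalGenerators U)).Nonempty) : IsOpen (U : Set G) := by
  obtain ⟨g, hg⟩ := hU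
  exact U.isOpen_of_mem_nhds
    (mem_of_superset (mem_interior_iff_mem_nhds.1 hg) (topologicalGenerators_subset U))

namespace ChabautySpace

theorem eventually_le_of_nonempty_interior_topologicalGenerators {H : ChabautySpace G}
    {U : Subgroup G} (hU : (interior (topologicalGenerators U)).Nonempty) (hUH : U ≤ H.1) :
    ∀ᶠ L in 𝓝 H, U ≤ L.1 := by
  obtain ⟨g, hg⟩ := hU
  have hgH : g ∈ H.1 := hUH (topologicalGenerators_subset U (interior_subset hg))
  filter_upwards [eventually_inter_nonempty isOpen_interior ⟨g, hgH, hg⟩] with L ⟨x, hxL, hxU⟩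
  have hxU : (Subgroup.zpowers x).topologicalClosure = U :=
    interior_subset (s := topologicalGenerators U) hxU
  rw [← hxU]
  exact Subgroup.topologicalClosure_minimal _ (Subgroup.zpowers_le_of_mem hxL) L.2

theorem eventually_le_of_map_fg {H : ChabautySpace G} {U : Subgroup G} [U.Normal]
    (hU : IsOpen (U : Set G)) (hfg : (H.1.map (QuotientGroup.mk' U)).FG)
    (hUL : ∀ᶠ L in 𝓝 H, U ≤ L.1) : ∀ᶠ L in 𝓝 H, H.1 ≤ L.1 := by
  have : DiscreteTopology (G ⧸ U) := QuotientGroup.discreteTopology hU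
  obtain ⟨S, hS⟩ := hfg
  have hcoset : ∀ t ∈ S, ∀ᶠ L in 𝓝 H, t ∈ L.1.map (QuotientGroup.mk' U) := by
    intro t ht
    obtain ⟨s, hs, rfl⟩ : t ∈ H.1.map (QuotientGroup.mk' U) := hS ▸ Subgroup.subset_closure ht
    have hopen := (isOpen_discrete {QuotientGroup.mk' U s}).preimage QuotientGroup.continuous_mk
    filter_upwards [eventually_inter_nonempty hopen ⟨s, hs, rfl⟩] with L hL using hL
  filter_upwards [hUL, (eventually_all_finset S).2 hcoset] with L hUL hSL
  have hmap : H.1.map (QuotientGroup.mk' U) ≤ L.1.map (QuotientGroup.mk' U) := by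
    rw [← hS]
    exact (Subgroup.closure_le _).2 hSL
  rwa [Subgroup.map_le_map_iff, QuotientGroup.ker_mk', sup_eq_left.2 hUL] at hmap

theorem isOpen_singleton_of_nonempty_interior_topologicalGenerators
    (hG : IsCompactlyGeneratedGroup G) {H : ChabautySpace G} [H.1.FiniteIndex] {U : Subgroup G}
    [U.Normal] (hU : (interior (topologicalGenerators U)).Nonempty) (hUH : U ≤ H.1) :
    IsOpen {H} := by
  have hUopen := isOpen_of_nonempty_interior_topologicalGenerators hU
  have := hG.fg_quotient hUopen
  have : (H.1.map (QuotientGroup.mk' U)).FiniteIndex := ⟨ne_zero_of_dvd_ne_zero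
    H.1.index_ne_zero_of_finite (H.1.index_map_dvd (QuotientGroup.mk'_surjective U))⟩
  -- Schreier's lemma: a finite-index subgroup of a finitely generated group is finitely generated.
  have hfg : (H.1.map (QuotientGroup.mk' U)).FG :=
    (Group.fg_iff_subgroup_fg _).1 (Subgroup.fg_of_index_ne_zero _)
  exact isOpen_singleton_of_eventually_le <| eventually_le_of_map_fg hUopen hfg
    (eventually_le_of_nonempty_interior_topologicalGenerators hU hUH)

end ChabautySpace

end TopologicalGroup

theorem residuallyFinite_of_fg (A : Type*) [CommGroup A] [Group.FG A] :
    Group.ResiduallyFinite A := by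
  refine Group.residuallyFinite_iff_forall_finiteIndex.2 fun g hg => ?_
  -- The `n`-th powers form a finite-index subgroup; only `1` has `n`-th roots for all `n ≠ 0`.
  have hroot : ∀ n : ℕ, n ≠ 0 → ∃ h : A, h ^ n = g := fun n hn =>
    have := Subgroup.finiteIndex_range_powMonoidHom_of_fg A hn
    hg (powMonoidHom n : A →* A).range
  obtain ⟨ι, j, _, _, p, hp, k, ⟨e⟩⟩ := CommGroup.equiv_free_prod_prod_multiplicative_zmod A
  have hroot_e : ∀ n : ℕ, n ≠ 0 → ∃ h, e g = h ^ n := fun n hn => by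
    obtain ⟨h, rfl⟩ := hroot n hn
    exact ⟨e h, map_pow e h n⟩
  refine (map_eq_one_iff e e.injective).1 (Prod.ext (funext fun i => ?_) (funext fun i => ?_))
  · obtain ⟨h, hh⟩ := hroot_e _ (Nat.succ_ne_zero ((e g).1 i).toAdd.natAbs)
    have hdvd : (((e g).1 i).toAdd.natAbs.succ : ℤ) ∣ ((e g).1 i).toAdd :=
      ⟨(h.1 i).toAdd, by simpa using congrArg (fun x => (x.1 i).toAdd) hh⟩
    exact toAdd_eq_zero.1 (Int.eq_zero_of_dvd_of_natAbs_lt_natAbs hdvd (Nat.lt_succ_self _))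
  · obtain ⟨h, hh⟩ := hroot_e _ (pow_ne_zero (k i) (hp i).ne_zero)
    rw [hh]
    exact toAdd_eq_zero.1 (by simp)

theorem exists_finiteIndex_disjoint_of_finite {A : Type*} [Group A] [Group.ResiduallyFinite A]
    {F : Set A} (hF : F.Finite) (h1 : (1 : A) ∉ F) :
    ∃ N : Subgroup A, N.FiniteIndex ∧ Disjoint (N : Set A) F := by
  have hsep : ∀ g ∈ F, ∃ N : Subgroup A, N.FiniteIndex ∧ g ∉ N := by
    intro g hg
    by_contra! hmem
    exact h1 (Group.residuallyFinite_iff_forall_finiteIndex.1 ‹_› g hmem ▸ hg)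
  choose! N hNfin hgN using hsep
  have := hF.to_subtype
  have (g : F) : (N g).FiniteIndex := hNfin g g.2
  exact ⟨⨅ g : F, N g, Subgroup.finiteIndex_iInf fun _ => inferInstance,
    disjoint_left.2 fun g hg hgF => hgN g hgF (Subgroup.mem_iInf.1 hg ⟨g, hgF⟩)⟩

section Density

variable {G : Type*} [CommGroup G] [TopologicalSpace G]

theorem exists_isOpen_disjoint_sup [NonarchimedeanGroup G] {H : Subgroup G}
    (hH : IsClosed (H : Set G)) {K : Set G} (hK : IsCompact K) (hHK : Disjoint (H : Set G) K) :
    ∃ U : Subgroup G, IsOpen (U : Set G) ∧ Disjoint ((H ⊔ U : Subgroup G) : Set G) K := by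
  obtain ⟨V, hV, hKV⟩ :=
    compact_open_separated_mul_right hK hH.isOpen_compl (subset_compl_iff_disjoint_left.2 hHK)
  obtain ⟨U, hUV⟩ := NonarchimedeanGroup.is_nonarchimedean V hV
  refine ⟨U, U.isOpen, disjoint_left.2 fun x hx hxK => ?_⟩
  obtain ⟨h, hh, u, hu, rfl⟩ := Subgroup.mem_sup.1 hx
  exact hKV (mul_mem_mul hxK (hUV (U.inv_mem hu))) (by simpa using hh)

theorem IsCompactlyGeneratedGroup.exists_finiteIndex_disjoint [IsTopologicalGroup G]
    (hG : IsCompactlyGeneratedGroup G) {M : Subgroup G} (hM : IsOpen (M : Set G)) {K : Set G}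
    (hK : IsCompact K) (hMK : Disjoint (M : Set G) K) :
    ∃ L : Subgroup G, M ≤ L ∧ L.FiniteIndex ∧ Disjoint (L : Set G) K := by
  have : DiscreteTopology (G ⧸ M) := QuotientGroup.discreteTopology hM
  have := hG.fg_quotient hM
  have := residuallyFinite_of_fg (G ⧸ M)
  have h1 : (1 : G ⧸ M) ∉ QuotientGroup.mk' M '' K := by
    rintro ⟨x, hxK, hx⟩
    exact disjoint_left.1 hMK ((QuotientGroup.eq_one_iff x).1 hx) hxK
  obtain ⟨N, hN, hNK⟩ := exists_finiteIndex_disjoint_of_finite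
    (hK.image QuotientGroup.continuous_mk).finite_of_discrete h1
  refine ⟨N.comap (QuotientGroup.mk' M), ?_, ⟨?_⟩, ?_⟩
  · exact QuotientGroup.le_comap_mk' M N
  · rw [N.index_comap_of_surjective (QuotientGroup.mk'_surjective M)]
    exact hN.index_ne_zero
  · exact disjoint_left.2 fun x hx hxK => disjoint_left.1 hNK hx (mem_image_of_mem _ hxK)

theorem ChabautySpace.dense_setOf_isOpen_index_ne_zero [NonarchimedeanGroup G]
    (hG : IsCompactlyGeneratedGroup G) :
    Dense {H : ChabautySpace G | IsOpen (H.1 : Set G) ∧ H.1.index ≠ 0} := by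
  refine dense_iff_inter_open.2 fun W hW ⟨H, hH⟩ => ?_
  obtain ⟨K, hK, hHK, hKW⟩ := exists_isCompact_forall_ge_mem hW hH
  obtain ⟨U, hU, hUK⟩ := exists_isOpen_disjoint_sup H.2 hK hHK
  have hHU : IsOpen ((H.1 ⊔ U : Subgroup G) : Set G) := Subgroup.isOpen_mono le_sup_right hU
  obtain ⟨L, hHUL, hL, hLK⟩ := hG.exists_finiteIndex_disjoint hHU hK hUK
  have hLopen : IsOpen (L : Set G) := Subgroup.isOpen_mono hHUL hHU
  exact ⟨⟨L, L.isClosed_of_isOpen hLopen⟩, hKW _ (le_sup_left.trans hHUL) hLK,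
    hLopen, hL.index_ne_zero⟩

end Density

section Isolated

variable {X : Type*} [TopologicalSpace X] {N : Set X}

theorem isOpen_of_forall_isOpen_singleton (hN : ∀ x ∈ N, IsOpen {x}) : IsOpen N := by
  rw [← biUnion_of_singleton N]
  exact isOpen_biUnion hN

theorem discreteTopology_of_forall_isOpen_singleton (hN : ∀ x ∈ N, IsOpen {x}) :
    DiscreteTopology N :=
  discreteTopology_subtype_iff'.2 fun x hx =>
    ⟨{x}, hN x hx, inter_eq_left.2 (singleton_subset_iff.2 hx)⟩

theorem countable_of_forall_isOpen_singleton [SecondCountableTopology X]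
    (hN : ∀ x ∈ N, IsOpen {x}) : N.Countable :=
  have := discreteTopology_of_forall_isOpen_singleton hN
  countable_coe_iff.1 (separableSpace_iff_countable.1 inferInstance)

end Isolated

section UltrametricUnits

section Ring

variable {R : Type*} [NormedRing R] [NormOneClass R] [IsUltrametricDist R]

theorem norm_one_add_pow_sub_le {y : R} (hy : ‖y‖ ≤ 1) (a : ℕ) :
    ‖(1 + y) ^ a - 1 - a * y‖ ≤ ‖y‖ ^ 2 := by
  induction a with
  | zero => simp
  | succ a ih =>
    have hsplit : (1 + y) ^ (a + 1) - 1 - (a + 1 : ℕ) * y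
        = ((1 + y) ^ a - 1 - a * y) * (1 + y) + a * y ^ 2 := by
      push_cast
      noncomm_ring
    have hy1 : ‖1 + y‖ ≤ 1 :=
      (IsUltrametricDist.norm_add_le_max _ _).trans (max_le norm_one.le hy)
    rw [hsplit]
    refine (IsUltrametricDist.norm_add_le_max _ _).trans (max_le ?_ ?_)
    · exact (norm_mul_le_of_le ih hy1).trans_eq (mul_one _)
    · exact (norm_mul_le_of_le (IsUltrametricDist.norm_natCast_le_one R a)
        (norm_pow_le y 2)).trans_eq (one_mul _)

theorem norm_eq_one_of_norm_sub_one_lt_one {x : R} (hx : ‖x - 1‖ < 1) : ‖x‖ = 1 := by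
  have := IsUltrametricDist.norm_eq_of_add_norm_lt_max (x := x) (y := -1)
    (by rw [norm_neg, norm_one, ← sub_eq_add_neg]; exact hx.trans_le (le_max_right _ _))
  rwa [norm_neg, norm_one] at this

end Ring

variable {K : Type*} [NormedField K] [IsUltrametricDist K]

variable (K) in
/-- The higher unit group `{x | ‖x - 1‖ ≤ r}` of an ultrametric field, for a radius
`0 ≤ r < 1`. -/
def higherUnits {r : ℝ} (hr₀ : 0 ≤ r) (hr₁ : r < 1) : Subgroup Kˣ where
  carrier := {x | ‖(x : K) - 1‖ ≤ r}
  one_mem' := by simpa using hr₀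
  mul_mem' := by
    intro x y hx hy
    have hx1 : ‖(x : K)‖ = 1 := norm_eq_one_of_norm_sub_one_lt_one (lt_of_le_of_lt hx hr₁)
    have hsplit : (x * y : K) - 1 = x * (y - 1) + (x - 1) := by ring
    rw [mem_ofPred_eq, Units.val_mul, hsplit]
    refine (IsUltrametricDist.norm_add_le_max _ _).trans (max_le ?_ hx)
    rwa [norm_mul, hx1, one_mul]
  inv_mem' := by
    intro x hx
    have hx1 : ‖(x : K)‖ = 1 := norm_eq_one_of_norm_sub_one_lt_one (lt_of_le_of_lt hx hr₁)
    have hsplit : ((x⁻¹ : Kˣ) : K) - 1 = -(x⁻¹ : Kˣ) * (x - 1) := by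
      rw [mul_sub, neg_mul, Units.inv_mul]; ring
    rw [mem_ofPred_eq, hsplit, norm_mul, norm_neg, Units.val_inv_eq_inv_val, norm_inv, hx1,
      inv_one, one_mul]
    exact hx

variable {r : ℝ} {hr₀ : 0 ≤ r} {hr₁ : r < 1}

theorem mem_higherUnits {x : Kˣ} : x ∈ higherUnits K hr₀ hr₁ ↔ ‖(x : K) - 1‖ ≤ r :=
  Iff.rfl

theorem isClosed_higherUnits : IsClosed (higherUnits K hr₀ hr₁ : Set Kˣ) :=
  isClosed_le (Units.continuous_val.sub continuous_const).norm continuous_const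

theorem exists_higherUnits_subset {V : Set Kˣ} (hV : V ∈ 𝓝 1) :
    ∃ ε > 0, ∀ (r : ℝ) (hr₀ : 0 ≤ r) (hr₁ : r < 1), r < ε →
      (higherUnits K hr₀ hr₁ : Set Kˣ) ⊆ V := by
  rw [Units.isEmbedding_val₀.nhds_eq_comap, Metric.nhds_basis_ball.comap _ |>.mem_iff] at hV
  obtain ⟨ε, hε, hεV⟩ := hV
  refine ⟨ε, hε, fun r hr₀ hr₁ hrε x hx => hεV ?_⟩
  rw [mem_preimage, mem_ball_iff_norm, Units.val_one]
  exact lt_of_le_of_lt hx hrε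

theorem isOpen_setOf_norm_units_sub_one_eq (hr : r ≠ 0) :
    IsOpen {x : Kˣ | ‖(x : K) - 1‖ = r} := by
  have := (IsUltrametricDist.isOpen_sphere (1 : K) hr).preimage Units.continuous_val
  simpa only [preimage, mem_sphere_iff_norm] using this

end UltrametricUnits

section ProperField

theorem isCompact_setOf_norm_units_mem_Icc {K : Type*} [NormedField K] [ProperSpace K] {a b : ℝ}
    (ha : 0 < a) : IsCompact {x : Kˣ | ‖(x : K)‖ ∈ Icc a b} := by
  have hannulus : IsCompact {y : K | ‖y‖ ∈ Icc a b} :=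
    (isCompact_closedBall (0 : K) b).of_isClosed_subset
      (isClosed_Icc.preimage continuous_norm) fun y hy => mem_closedBall_zero_iff.2 hy.2
  refine Units.isEmbedding_val₀.isInducing.isCompact_preimage' hannulus fun y hy => ?_
  exact ⟨Units.mk0 y (norm_pos_iff.1 (ha.trans_le hy.1)), rfl⟩

theorem isCompactlyGeneratedGroup_units (K : Type*) [NontriviallyNormedField K] [ProperSpace K] :
    IsCompactlyGeneratedGroup Kˣ := by
  obtain ⟨c, hc⟩ := NormedField.exists_one_lt_norm K
  have hc₀ : 0 < ‖c‖ := one_pos.trans hc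
  let u := Units.mk0 c (norm_pos_iff.1 hc₀)
  let C : Set Kˣ := {x | ‖(x : K)‖ ∈ Icc 1 ‖c‖}
  refine ⟨C, isCompact_setOf_norm_units_mem_Icc one_pos, (Subgroup.eq_top_iff' _).2 fun x => ?_⟩
  have hu : u ∈ Subgroup.closure C := Subgroup.subset_closure ⟨hc.le, le_rfl⟩
  obtain ⟨n, hn, hn'⟩ := exists_mem_Ico_zpow (norm_pos_iff.2 x.ne_zero) hc
  have hcn : 0 < ‖c‖ ^ n := zpow_pos hc₀ n
  have hquot : x / u ^ n ∈ C := by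
    simp only [C, u, mem_ofPred_eq, mem_Icc, Units.val_div_eq_div_val, Units.val_zpow_eq_zpow_val,
      Units.val_mk0, norm_div, norm_zpow]
    rw [one_le_div hcn, div_le_iff₀ hcn, ← zpow_one_add₀ hc₀.ne', add_comm]
    exact ⟨hn, hn'.le⟩
  simpa using Subgroup.mul_mem _ (Subgroup.subset_closure hquot) (Subgroup.zpow_mem _ hu n)

end ProperField

section Padic

variable {p : ℕ} [Fact p.Prime]

theorem exists_norm_padic_sub_natCast_le {c : ℚ_[p]} (hc : ‖c‖ ≤ 1) :
    ∃ a : ℕ, ‖c - a‖ ≤ (p : ℝ)⁻¹ := by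
  have hp : 0 < (p : ℝ)⁻¹ := inv_pos.2 (mod_cast (Fact.out : p.Prime).pos)
  obtain ⟨c, rfl⟩ : ∃ c' : ℤ_[p], (c' : ℚ_[p]) = c := ⟨⟨c, hc⟩, rfl⟩
  obtain ⟨a, ha⟩ := PadicInt.denseRange_natCast.exists_dist_lt c hp
  rw [dist_eq_norm, PadicInt.norm_def] at ha
  exact ⟨a, by simpa using ha.le⟩

theorem norm_padic_pow_prime_sub_one {z : ℚ_[p]} (hz : ‖z - 1‖ < (p : ℝ)⁻¹) :
    ‖z ^ p - 1‖ = (p : ℝ)⁻¹ * ‖z - 1‖ := by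
  have hp : (1 : ℝ) < p := mod_cast (Fact.out : p.Prime).one_lt
  rcases eq_or_ne z 1 with rfl | hne
  · simp
  have hpos : 0 < ‖z - 1‖ := norm_pos_iff.2 (sub_ne_zero.2 hne)
  have hlt : ‖z ^ p - 1 - p * (z - 1)‖ < ‖(p : ℚ_[p]) * (z - 1)‖ := by
    have hexpand := norm_one_add_pow_sub_le (hz.le.trans (inv_le_one_of_one_le₀ hp.le)) p
    rw [add_sub_cancel] at hexpand
    rw [norm_mul, Padic.norm_p]
    exact hexpand.trans_lt (sq ‖z - 1‖ ▸ mul_lt_mul_of_pos_right hz hpos)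
  have hmax := IsUltrametricDist.norm_add_eq_max_of_norm_ne_norm hlt.ne
  rwa [sub_add_cancel, max_eq_right hlt.le, norm_mul, Padic.norm_p] at hmax

theorem exists_norm_padic_sub_pow_le_inv_prime_mul {w z : ℚ_[p]} (hz : ‖z - 1‖ ≤ (p : ℝ)⁻¹)
    (hw : ‖w - 1‖ ≤ ‖z - 1‖) : ∃ a : ℕ, ‖w - z ^ a‖ ≤ (p : ℝ)⁻¹ * ‖z - 1‖ := by
  have hp : (1 : ℝ) < p := mod_cast (Fact.out : p.Prime).one_lt
  rcases eq_or_ne z 1 with rfl | hne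
  · exact ⟨0, by simpa using hw⟩
  have hz₀ : z - 1 ≠ 0 := sub_ne_zero.2 hne
  -- To first order `z ^ a` is `1 + a * (z - 1)`, so `a` should approximate `(w - 1) / (z - 1)`.
  obtain ⟨a, ha⟩ := exists_norm_padic_sub_natCast_le (c := (w - 1) / (z - 1))
    (by rw [norm_div]; exact div_le_one_of_le₀ hw (norm_nonneg _))
  have hexpand := norm_one_add_pow_sub_le (hz.trans (inv_le_one_of_one_le₀ hp.le)) a
  rw [add_sub_cancel] at hexpand
  have hsplit : w - z ^ a
      = ((w - 1) / (z - 1) - a) * (z - 1) + -(z ^ a - 1 - a * (z - 1)) := by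
    field_simp
    ring
  refine ⟨a, ?_⟩
  rw [hsplit]
  refine (IsUltrametricDist.norm_add_le_max _ _).trans (max_le ?_ ?_)
  · rw [norm_mul]
    gcongr
  · rw [norm_neg]
    exact hexpand.trans (sq ‖z - 1‖ ▸ mul_le_mul_of_nonneg_right hz (norm_nonneg _))

theorem exists_norm_padic_sub_pow_le_inv_prime_pow_mul {w x : ℚ_[p]} (hx : ‖x - 1‖ < (p : ℝ)⁻¹)
    (hw : ‖w - 1‖ ≤ ‖x - 1‖) (k : ℕ) : ∃ a : ℕ, ‖w - x ^ a‖ ≤ (p : ℝ)⁻¹ ^ k * ‖x - 1‖ := by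
  induction k generalizing w x with
  | zero => exact ⟨0, by simpa using hw⟩
  | succ k ih =>
    have hp : (p : ℝ)⁻¹ ≤ 1 := inv_le_one_of_one_le₀ (mod_cast (Fact.out : p.Prime).one_le)
    have hx1 : ‖x‖ = 1 := norm_eq_one_of_norm_sub_one_lt_one (hx.trans_le hp)
    have hx₀ : x ≠ 0 := norm_ne_zero_iff.1 (hx1.trans_ne one_ne_zero)
    have hpow := norm_padic_pow_prime_sub_one hx
    obtain ⟨a, ha⟩ := exists_norm_padic_sub_pow_le_inv_prime_mul hx.le hw
    have hxp : ‖x ^ p - 1‖ < (p : ℝ)⁻¹ :=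
      hpow ▸ (mul_le_of_le_one_left (norm_nonneg _) hp).trans_lt hx
    have hscale (b : ℕ) : ‖w / x ^ a - (x ^ p) ^ b‖ = ‖w - x ^ (a + p * b)‖ := by
      have hfactor : w - x ^ (a + p * b) = x ^ a * (w / x ^ a - (x ^ p) ^ b) := by
        field_simp
        ring
      rw [hfactor, norm_mul, norm_pow, hx1, one_pow, one_mul]
    obtain ⟨b, hb⟩ := ih hxp (w := w / x ^ a) (by simpa [hpow] using (hscale 0).trans_le ha)
    exact ⟨a + p * b, by rwa [← hscale, pow_succ, mul_assoc, ← hpow]⟩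

theorem topologicalClosure_zpowers_padicUnits {x : ℚ_[p]ˣ} {r : ℝ} {hr₀ : 0 ≤ r} {hr₁ : r < 1}
    (hrp : r < (p : ℝ)⁻¹) (hx : ‖(x : ℚ_[p]) - 1‖ = r) :
    (Subgroup.zpowers x).topologicalClosure = higherUnits ℚ_[p] hr₀ hr₁ := by
  refine le_antisymm (Subgroup.topologicalClosure_minimal _
    (Subgroup.zpowers_le_of_mem (mem_higherUnits.2 hx.le)) isClosed_higherUnits) fun w hw => ?_
  have hp : (1 : ℝ) < p := mod_cast (Fact.out : p.Prime).one_lt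
  rw [← SetLike.mem_coe, Subgroup.topologicalClosure_coe,
    Units.isEmbedding_val₀.isInducing.closure_eq_preimage_closure_image, mem_preimage,
    Metric.mem_closure_iff]
  intro ε hε
  obtain ⟨k, hk⟩ := exists_pow_lt_of_lt_one hε (inv_lt_one_of_one_lt₀ hp)
  obtain ⟨a, ha⟩ := exists_norm_padic_sub_pow_le_inv_prime_pow_mul (hx ▸ hrp)
    ((mem_higherUnits.1 hw).trans hx.ge) k
  refine ⟨_, mem_image_of_mem _ (Subgroup.npow_mem_zpowers x a), ?_⟩
  rw [dist_eq_norm, Units.val_pow_eq_pow_val]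
  calc ‖(w : ℚ_[p]) - x ^ a‖ ≤ (p : ℝ)⁻¹ ^ k * ‖(x : ℚ_[p]) - 1‖ := ha
    _ ≤ (p : ℝ)⁻¹ ^ k := mul_le_of_le_one_right (by positivity) (hx.trans_le hr₁.le)
    _ < ε := hk

theorem exists_subset_nonempty_interior_topologicalGenerators_padicUnits {V : Set ℚ_[p]ˣ}
    (hV : V ∈ 𝓝 1) : ∃ U : Subgroup ℚ_[p]ˣ,
      (interior (topologicalGenerators U)).Nonempty ∧ (U : Set ℚ_[p]ˣ) ⊆ V := by
  have hp : (1 : ℝ) < p := mod_cast (Fact.out : p.Prime).one_lt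
  obtain ⟨ε, hε, hεV⟩ := exists_higherUnits_subset hV
  obtain ⟨y, hy₀, hy⟩ :=
    NormedField.exists_norm_lt ℚ_[p] (lt_min hε (inv_pos.2 (one_pos.trans hp)))
  rw [lt_min_iff] at hy
  have hy₁ : ‖y‖ < 1 := hy.2.trans (inv_lt_one_of_one_lt₀ hp)
  have hx : ‖1 + y‖ = 1 := norm_eq_one_of_norm_sub_one_lt_one (by rwa [add_sub_cancel_left])
  let x : ℚ_[p]ˣ := Units.mk0 (1 + y) (norm_ne_zero_iff.1 (hx.trans_ne one_ne_zero))
  refine ⟨higherUnits ℚ_[p] hy₀.le hy₁, ⟨x, ?_⟩, hεV _ _ _ hy.1⟩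
  refine interior_maximal (fun z hz => ?_) (isOpen_setOf_norm_units_sub_one_eq hy₀.ne')
    (show ‖(x : ℚ_[p]) - 1‖ = ‖y‖ by rw [Units.val_mk0, add_sub_cancel_left])
  exact topologicalClosure_zpowers_padicUnits hy.2 hz

end Padic

theorem chabauty_padicUnits_proper_compactification_general {G : Type*} [CommGroup G]
    [TopologicalSpace G] [IsTopologicalGroup G] [LocallyCompactSpace G]
    [SecondCountableTopology G] (hG : IsCompactlyGeneratedGroup G)
    (hbasis : ∀ V ∈ 𝓝 (1 : G), ∃ U : Subgroup G,
      (interior (topologicalGenerators U)).Nonempty ∧ (U : Set G) ⊆ V) :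
    CompactSpace (ChabautySpace G) ∧ MetrizableSpace (ChabautySpace G) ∧
    IsOpen {H : ChabautySpace G | IsOpen (H.1 : Set G) ∧ H.1.index ≠ 0} ∧
    Set.Countable {H : ChabautySpace G | IsOpen (H.1 : Set G) ∧ H.1.index ≠ 0} ∧
    Dense {H : ChabautySpace G | IsOpen (H.1 : Set G) ∧ H.1.index ≠ 0} ∧
    DiscreteTopology {H : ChabautySpace G | IsOpen (H.1 : Set G) ∧ H.1.index ≠ 0} := by
  have : NonarchimedeanGroup G := ⟨fun V hV => by
    obtain ⟨U, hU, hUV⟩ := hbasis V hV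
    exact ⟨⟨U, isOpen_of_nonempty_interior_topologicalGenerators hU⟩, hUV⟩⟩
  have hisolated : ∀ H ∈ {H : ChabautySpace G | IsOpen (H.1 : Set G) ∧ H.1.index ≠ 0},
      IsOpen {H} := by
    rintro H ⟨hH, hindex⟩
    have : H.1.FiniteIndex := ⟨hindex⟩
    obtain ⟨U, hU, hUH⟩ := hbasis H.1 (hH.mem_nhds H.1.one_mem)
    exact ChabautySpace.isOpen_singleton_of_nonempty_interior_topologicalGenerators hG hU hUH
  exact ⟨inferInstance, inferInstance, isOpen_of_forall_isOpen_singleton hisolated,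
    countable_of_forall_isOpen_singleton hisolated,
    ChabautySpace.dense_setOf_isOpen_index_ne_zero hG,
    discreteTopology_of_forall_isOpen_singleton hisolated⟩

/-- The Chabauty space of `ℚ_p^×` is a proper compactification of `ℕ`, identified with the
set `N` of open finite-index subgroups: `C(G)` is compact metrizable and `N` is an open,
countable, dense, discrete subset. -/
theorem chabauty_padicUnits_proper_compactification (p : ℕ) [Fact p.Prime] :
    CompactSpace (ChabautySpace ℚ_[p]ˣ) ∧
    TopologicalSpace.MetrizableSpace (ChabautySpace ℚ_[p]ˣ) ∧
    IsOpen {H : ChabautySpace ℚ_[p]ˣ | IsOpen (H.1 : Set ℚ_[p]ˣ) ∧ H.1.index ≠ 0} ∧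
    Set.Countable {H : ChabautySpace ℚ_[p]ˣ | IsOpen (H.1 : Set ℚ_[p]ˣ) ∧ H.1.index ≠ 0} ∧
    Dense {H : ChabautySpace ℚ_[p]ˣ | IsOpen (H.1 : Set ℚ_[p]ˣ) ∧ H.1.index ≠ 0} ∧
    DiscreteTopology {H : ChabautySpace ℚ_[p]ˣ | IsOpen (H.1 : Set ℚ_[p]ˣ) ∧ H.1.index ≠ 0} := by
  have : SecondCountableTopology ℚ_[p]ˣ := Units.isEmbedding_val₀.secondCountableTopology
  exact chabauty_padicUnits_proper_compactification_general (isCompactlyGeneratedGroup_units ℚ_[p])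
    fun _ hV => exists_subset_nonempty_interior_topologicalGenerators_padicUnits hV
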